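/- arXiv:1903.07228 — 5 statements merged into one kernel-verified Lean document; each statement's English description precedes it below -/
import Mathlib

section
/- Coupling representation for linear QSA (Theorem 2, equation (26)). Suppose every eigenvalue λ of Ā = I + A satisfies Re(λ) < −ε_S, where 0 < ε_S and ε_S ≠ 1, and set δ_S = min(ε_S, 1). Suppose ξ, ξ^I and ξ^II are bounded on [0,∞). Then there exists a constant C < ∞, not depending on the initial condition, such that every linear QSA process θ satisfies, for all t ≥ 0: ‖θ(t) − (1/(t+1))·(ξ^I(t) + S(t;0)θ(0))‖ ≤ C/(1+t)^{1+δ_S}. -/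
open intervalIntegral

namespace QSAaux

section expbound
open scoped Matrix.Norms.Operator

theorem mulVec_exp_bound {d : ℕ} (B : Matrix (Fin d) (Fin d) ℂ) (ε : ℝ)
    (heig : ∀ μ ∈ spectrum ℂ B, μ.re < -ε) (v : Fin d → ℂ) :
    ∃ K : ℝ, ∀ s : ℝ, 0 ≤ s →
      ‖Matrix.mulVec (NormedSpace.exp ((s : ℂ) • B)) v‖ ≤ K * Real.exp (-ε * s) := by
  have hv : v ∈ ⨆ μ, Module.End.maxGenEigenspace (Matrix.toLin' B) μ := by
    rw [Module.End.iSup_maxGenEigenspace_eq_top]; trivial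
  refine Submodule.iSup_induction _ (motive := fun v => ∃ K : ℝ, ∀ s : ℝ, 0 ≤ s →
      ‖Matrix.mulVec (NormedSpace.exp ((s : ℂ) • B)) v‖ ≤ K * Real.exp (-ε * s)) hv ?mem ?zero ?add
  case zero => exact ⟨0, fun s _ => by simp⟩
  case add =>
    intro x y hx hy
    obtain ⟨K, hK⟩ := hx
    obtain ⟨K', hK'⟩ := hy
    refine ⟨K + K', fun s hs => ?_⟩
    rw [Matrix.mulVec_add, add_mul]
    exact (norm_add_le _ _).trans (add_le_add (hK s hs) (hK' s hs))
  case mem =>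
    clear hv v
    intro μ v hv
    by_cases hv0 : v = 0
    · exact ⟨0, fun s _ => by simp [hv0]⟩
    rw [Module.End.mem_maxGenEigenspace] at hv
    obtain ⟨k, hk⟩ := hv
    have hμ : μ ∈ spectrum ℂ B := by
      rw [← Matrix.spectrum_toLin', ← Module.End.hasEigenvalue_iff_mem_spectrum]
      apply Module.End.hasEigenvalue_of_hasGenEigenvalue (k := k)
      intro hbot
      apply hv0
      rw [← Submodule.mem_bot ℂ, ← hbot, Module.End.mem_genEigenspace_nat]
      exact hk
    have hre := heig μ hμ
    set N : Matrix (Fin d) (Fin d) ℂ := B - μ • 1 with hN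
    have hk' : ∀ n, k ≤ n → Matrix.mulVec (N ^ n) v = 0 := by
      intro n hn
      obtain ⟨m, rfl⟩ := Nat.exists_eq_add_of_le hn
      rw [add_comm, pow_add, ← Matrix.mulVec_mulVec]
      have : Matrix.mulVec (N ^ k) v = 0 := by
        rw [← Matrix.toLin'_apply, Matrix.toLin'_pow]
        rw [← hk, hN, map_sub, map_smul, Matrix.toLin'_one]
        rfl
      rw [this, Matrix.mulVec_zero]
    have hexp : ∀ s : ℝ, Matrix.mulVec (NormedSpace.exp ((s : ℂ) • B)) v =
        Complex.exp (s * μ) • ∑ j ∈ Finset.range k,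
          ((j.factorial : ℂ)⁻¹ * (s : ℂ) ^ j) • Matrix.mulVec (N ^ j) v := by
      intro s
      have h1 : (s : ℂ) • B = algebraMap ℂ (Matrix (Fin d) (Fin d) ℂ) (s * μ) + (s : ℂ) • N := by
        rw [hN, Algebra.algebraMap_eq_smul_one, smul_sub, smul_smul]; abel
      have hE : NormedSpace.exp (algebraMap ℂ (Matrix (Fin d) (Fin d) ℂ) (s * μ)) =
          algebraMap ℂ (Matrix (Fin d) (Fin d) ℂ) (Complex.exp (s * μ)) := by
        rw [Complex.exp_eq_exp_ℂ]
        exact (NormedSpace.algebraMap_exp_comm (s * μ)).symm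
      rw [h1, Matrix.exp_add_of_commute _ _ (Algebra.commute_algebraMap_left _ _), hE,
        ← Algebra.smul_def, Matrix.smul_mulVec]
      congr 1
      have h2 := NormedSpace.exp_series_hasSum_exp' (𝕂 := ℂ) ((s : ℂ) • N)
      let φ : Matrix (Fin d) (Fin d) ℂ →ₗ[ℂ] (Fin d → ℂ) :=
        { toFun := fun M => Matrix.mulVec M v
          map_add' := fun a b => Matrix.add_mulVec a b v
          map_smul' := fun c a => Matrix.smul_mulVec c a v }
      have hφ : Continuous φ := φ.continuous_of_finiteDimensional
      have h3 := h2.map φ hφ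
      have h4 := hasSum_sum_of_ne_finset_zero (L := .unconditional ℕ) (s := Finset.range k)
        (f := (φ ∘ fun n : ℕ => ((n.factorial : ℂ))⁻¹ • ((s : ℂ) • N) ^ n)) (by
          intro n hn
          have : k ≤ n := by simpa using hn
          simp [φ, smul_pow, Matrix.smul_mulVec, hk' n this])
      have h5 := h3.unique h4
      change φ _ = _
      refine h5.trans ?_
      apply Finset.sum_congr rfl
      intro j _
      simp only [φ, Function.comp_apply, LinearMap.coe_mk, AddHom.coe_mk, smul_pow,
        Matrix.smul_mulVec, smul_smul]
    set c : ℝ := -ε - μ.re with hc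
    have hc0 : 0 < c := by rw [hc]; linarith
    refine ⟨∑ j ∈ Finset.range k, (c ^ j)⁻¹ * ‖Matrix.mulVec (N ^ j) v‖, fun s hs => ?_⟩
    rw [hexp, norm_smul, Complex.norm_exp, Finset.sum_mul]
    have : ((s : ℂ) * μ).re = s * μ.re := by simp
    rw [this]
    refine (mul_le_mul_of_nonneg_left (norm_sum_le _ _) (Real.exp_pos _).le).trans ?_
    rw [Finset.mul_sum]
    apply Finset.sum_le_sum
    intro j _
    rw [norm_smul]
    have h1 : ‖((j.factorial : ℂ)⁻¹ * (s : ℂ) ^ j)‖ = s ^ j / j.factorial := by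
      simp [abs_of_nonneg hs]; ring
    have h2 := Real.pow_div_factorial_le_exp (c * s) (by positivity) j
    have h3 : s ^ j / j.factorial ≤ (c ^ j)⁻¹ * Real.exp (c * s) := by
      rw [← div_eq_inv_mul, le_div_iff₀ (by positivity)]
      calc _ = (c * s) ^ j / j.factorial := by rw [mul_pow]; ring
        _ ≤ _ := h2
    rw [h1]
    have h4 : Real.exp (-ε * s) = Real.exp (s * μ.re) * Real.exp (c * s) := by
      rw [← Real.exp_add, hc]; ring_nf
    rw [h4]
    calc _ ≤ Real.exp (s * μ.re) *
          (((c ^ j)⁻¹ * Real.exp (c * s)) * ‖Matrix.mulVec (N ^ j) v‖) := by gcongr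
      _ = _ := by ring

theorem entry_bound {d : ℕ} (B : Matrix (Fin d) (Fin d) ℂ) (ε : ℝ)
    (heig : ∀ μ ∈ spectrum ℂ B, μ.re < -ε) :
    ∃ K : ℝ, ∀ s : ℝ, 0 ≤ s → ∀ i j,
      ‖NormedSpace.exp ((s : ℂ) • B) i j‖ ≤ K * Real.exp (-ε * s) := by
  choose K hK using fun j : Fin d => mulVec_exp_bound B ε heig (Pi.single j 1)
  refine ⟨∑ j, |K j|, fun s hs i j => ?_⟩
  have h := hK j s hs
  rw [Matrix.mulVec_single_one] at h
  have h2 := (norm_le_pi_norm _ i).trans h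
  refine h2.trans ?_
  gcongr
  exact (le_abs_self _).trans
    (Finset.single_le_sum (f := fun j => |K j|) (fun _ _ => abs_nonneg _) (Finset.mem_univ j))

theorem clm_exp {d : ℕ} (M : Matrix (Fin d) (Fin d) ℝ) :
    Matrix.toEuclideanCLM (𝕜 := ℝ) (NormedSpace.exp M) =
      NormedSpace.exp (Matrix.toEuclideanCLM (𝕜 := ℝ) M) := by
  apply NormedSpace.map_exp
  exact (Matrix.toEuclideanCLM (𝕜 := ℝ) (n := Fin d)).toAlgEquiv.toLinearMap.continuous_of_finiteDimensional

theorem exp_bound {d : ℕ} (M : Matrix (Fin d) (Fin d) ℝ) (ε : ℝ)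
    (heig : ∀ μ ∈ spectrum ℂ (M.map (Complex.ofReal : ℝ → ℂ)), μ.re < -ε) :
    ∃ K : ℝ, 0 ≤ K ∧ ∀ s : ℝ, 0 ≤ s →
      ‖NormedSpace.exp (s • Matrix.toEuclideanCLM (𝕜 := ℝ) M)‖ ≤ K * Real.exp (-ε * s) := by
  obtain ⟨K, hK⟩ := entry_bound _ ε heig
  refine ⟨∑ i, ∑ j, |K| * ‖Matrix.toEuclideanCLM (𝕜 := ℝ) (Matrix.single i j (1 : ℝ) : Matrix (Fin d) (Fin d) ℝ)‖, by positivity,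
    fun s hs => ?_⟩
  rw [← map_smul, ← clm_exp]
  have hmap : (NormedSpace.exp (s • M)).map (Complex.ofReal : ℝ → ℂ) =
      NormedSpace.exp ((s : ℂ) • M.map (Complex.ofReal : ℝ → ℂ)) := by
    have := NormedSpace.map_exp (Complex.ofRealHom.mapMatrix (m := Fin d))
      (by
        change Continuous fun M : Matrix (Fin d) (Fin d) ℝ => M.map Complex.ofReal
        exact continuous_id.matrix_map Complex.continuous_ofReal) (s • M)
    change Complex.ofRealHom.mapMatrix _ = _
    refine this.trans ?_
    congr 1
    ext i j
    simp
  have hent : ∀ i j, |NormedSpace.exp (s • M) i j| ≤ |K| * Real.exp (-ε * s) := by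
    intro i j
    have h := hK s hs i j
    rw [← hmap, Matrix.map_apply, Complex.norm_real] at h
    refine h.trans ?_
    gcongr
    exact le_abs_self _
  generalize NormedSpace.exp (s • M) = Q at hent ⊢
  conv_lhs => rw [Matrix.matrix_eq_sum_single Q]
  rw [map_sum, Finset.sum_mul]
  refine (norm_sum_le _ _).trans (Finset.sum_le_sum fun i _ => ?_)
  rw [map_sum, Finset.sum_mul]
  refine (norm_sum_le _ _).trans (Finset.sum_le_sum fun j _ => ?_)
  have : Matrix.single i j (Q i j) = Q i j • Matrix.single i j (1 : ℝ) := by simp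
  rw [this, map_smul, norm_smul, Real.norm_eq_abs]
  calc _ ≤ (|K| * Real.exp (-ε * s)) * ‖Matrix.toEuclideanCLM (𝕜 := ℝ) (Matrix.single i j (1 : ℝ) : Matrix (Fin d) (Fin d) ℝ)‖ := by
        gcongr; exact hent i j
    _ = _ := by ring

end expbound

theorem core {E : Type*} [NormedAddCommGroup E] [NormedSpace ℝ E] [CompleteSpace E]
    (L : E →L[ℝ] E) (K ε M : ℝ) (hK : 0 ≤ K) (hε : 0 < ε) (hε1 : ε ≠ 1)
    (hexp : ∀ s : ℝ, 0 ≤ s → ‖NormedSpace.exp (s • L)‖ ≤ K * Real.exp (-ε * s))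
    (ξ ξI ξII : ℝ → E) (hI : ∀ t, HasDerivAt ξI (ξ t) t) (hII : ∀ t, HasDerivAt ξII (ξI t) t)
    (hI0 : ξI 0 = 0) (hII0 : ξII 0 = 0) (hM : ∀ t, 0 ≤ t → ‖ξII t‖ ≤ M) :
    ∃ C : ℝ, ∀ θ : ℝ → E,
      (∀ t : ℝ, 0 ≤ t → HasDerivAt θ ((1 / (t + 1)) • ((L - 1) (θ t) + ξ t)) t) →
      ∀ t : ℝ, 0 ≤ t →
        ‖θ t - (1 / (t + 1)) • (ξI t + NormedSpace.exp (Real.log (1 + t) • L) (θ 0))‖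
          ≤ C / (1 + t) ^ (1 + min ε 1) := by
  have hM0 : 0 ≤ M := (norm_nonneg _).trans (hM 0 le_rfl)
  set G : ℝ := ‖L‖ * M + ‖L‖ * (‖L‖ * M) with hG
  have hG0 : 0 ≤ G := by positivity
  refine ⟨K * G / |ε - 1| + ‖L‖ * M, fun θ hθ t ht => ?_⟩
  have hε1' : ε - 1 ≠ 0 := sub_ne_zero.2 hε1
  set F : ℝ → (E →L[ℝ] E) := fun r => NormedSpace.exp ((Real.log (1 + t) - Real.log (1 + r)) • L)
    with hF
  set p : ℝ → E := fun r => (1 + r) • θ r - ξI r - (1 + r)⁻¹ • L (ξII r) with hp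
  set e0 : E := NormedSpace.exp (Real.log (1 + t) • L) (θ 0) with he0
  have h1 : ∀ r : ℝ, HasDerivAt (fun r : ℝ => 1 + r) 1 r := fun r => (hasDerivAt_id r).const_add 1
  have hFd : ∀ r, 0 ≤ r → HasDerivAt F ((-(1 + r)⁻¹) • (F r * L)) r := by
    intro r hr
    have h2 : HasDerivAt (fun r => Real.log (1 + t) - Real.log (1 + r)) (-(1 + r)⁻¹) r := by
      have := ((h1 r).log (by positivity)).const_sub (Real.log (1 + t))
      simpa using this
    exact (hasDerivAt_exp_smul_const L _).scomp r h2
  have hpd : ∀ r, 0 ≤ r → HasDerivAt p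
      (L (θ r) - (1 + r)⁻¹ • L (ξI r) + ((1 + r) ^ 2)⁻¹ • L (ξII r)) r := by
    intro r hr
    have hr' : (1 + r) ≠ 0 := by positivity
    have a1 := (h1 r).smul (hθ r hr)
    have a2 := ((h1 r).inv hr').smul (L.hasFDerivAt.comp_hasDerivAt r (hII r))
    have a3 := (a1.sub (hI r)).sub a2
    refine a3.congr_deriv ?_
    rw [smul_smul, add_comm r 1, mul_one_div_cancel hr']
    simp only [sub_apply, one_apply_eq_self, one_smul, neg_div,
      one_div, neg_smul, Function.comp, Pi.inv_apply]
    abel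
  have hud : ∀ r, 0 ≤ r → HasDerivAt (fun r => F r (p r) - e0)
      (F r (((1 + r) ^ 2)⁻¹ • (L (ξII r) + L (L (ξII r))))) r := by
    intro r hr
    have hr' : (1 + r) ≠ 0 := by positivity
    refine (((hFd r hr).clm_apply (hpd r hr)).sub_const e0).congr_deriv ?_
    have : (-(1 + r)⁻¹ • (F r * L)) (p r) = F r (-(1 + r)⁻¹ • L (p r)) := by
      simp
    rw [this, ← map_add]
    congr 1
    simp only [hp, map_sub, map_smul, smul_sub, smul_smul, smul_add]
    have e1 : -(1 + r)⁻¹ * (1 + r) = -1 := by field_simp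
    have e2 : -(1 + r)⁻¹ * (1 + r)⁻¹ = -((1 + r) ^ 2)⁻¹ := by field_simp
    rw [e1, e2]
    module
  set Bd : ℝ → ℝ := fun r => K * G * (1 + t) ^ (-ε) * (((1 + r) ^ (ε - 1) - 1) / (ε - 1)) with hBd
  have hBdd : ∀ r, 0 ≤ r → HasDerivAt Bd (K * G * (1 + t) ^ (-ε) * (1 + r) ^ (ε - 2)) r := by
    intro r hr
    have hr' : (1 + r) ≠ 0 := by positivity
    have := ((((h1 r).rpow_const (p := ε - 1) (Or.inl hr')).sub_const 1).div_const
      (ε - 1)).const_mul (K * G * (1 + t) ^ (-ε))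
    refine this.congr_deriv ?_
    have : ε - 1 - 1 = ε - 2 := by ring
    rw [this]
    field_simp
  have key := image_norm_le_of_norm_deriv_right_le_deriv_boundary' (a := 0) (b := t)
    (f := fun r => F r (p r) - e0) (B := Bd)
    (fun r hr => (hud r hr.1).continuousAt.continuousWithinAt)
    (fun r hr => (hud r hr.1).hasDerivWithinAt)
    (by simp [hF, hp, hBd, hI0, hII0, he0])
    (fun r hr => (hBdd r hr.1).continuousAt.continuousWithinAt)
    (fun r hr => (hBdd r hr.1).hasDerivWithinAt)
    (by
      intro r hr
      have hr0 := hr.1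
      have hrp : 0 < 1 + r := by linarith
      have htp : 0 < 1 + t := by linarith
      have b1 : ‖F r‖ ≤ K * ((1 + t) ^ (-ε) * (1 + r) ^ ε) := by
        refine (hexp _ ?_).trans (le_of_eq ?_)
        · exact sub_nonneg.2 (Real.log_le_log hrp (by linarith [hr.2]))
        · rw [Real.rpow_def_of_pos htp, Real.rpow_def_of_pos hrp, ← Real.exp_add]
          ring_nf
      have b2 : ‖L (ξII r) + L (L (ξII r))‖ ≤ G := by
        have c1 : ‖L (ξII r)‖ ≤ ‖L‖ * M := L.le_opNorm_of_le (hM r hr0)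
        exact (norm_add_le _ _).trans (add_le_add c1 (L.le_opNorm_of_le c1))
      refine ((F r).le_opNorm _).trans ?_
      rw [norm_smul, Real.norm_of_nonneg (by positivity)]
      have b3 : (1 + r) ^ (ε - 2) = (1 + r) ^ ε * ((1 + r) ^ 2)⁻¹ := by
        rw [Real.rpow_sub hrp, Real.rpow_two]; rfl
      rw [b3]
      calc _ ≤ (K * ((1 + t) ^ (-ε) * (1 + r) ^ ε)) * (((1 + r) ^ 2)⁻¹ * G) := by gcongr
        _ = _ := by ring)
    (Set.right_mem_Icc.2 ht)
  have htp : 0 < 1 + t := by linarith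
  have hx1 : 1 ≤ 1 + t := by linarith
  have hFt : F t = 1 := by simp [hF]
  simp only [hFt, one_apply_eq_self] at key
  have hBt : Bd t ≤ K * G / |ε - 1| * (1 + t) ^ (-min ε 1) := by
    have : (1 + t) ^ (-ε) * (((1 + t) ^ (ε - 1) - 1) / (ε - 1)) ≤
        (1 + t) ^ (-min ε 1) / |ε - 1| := by
      rcases lt_or_gt_of_ne hε1 with h | h
      · rw [min_eq_left h.le, abs_of_neg (by linarith), div_eq_mul_inv _ (-(ε - 1)),
          ← neg_div_neg_eq, div_eq_mul_inv]
        have i1 : 0 ≤ (-(ε - 1))⁻¹ := inv_nonneg.2 (by linarith)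
        have i2 : 0 ≤ (1 + t) ^ (ε - 1) := by positivity
        apply mul_le_mul_of_nonneg_left _ (by positivity)
        apply mul_le_of_le_one_left i1
        linarith
      · rw [min_eq_right h.le, abs_of_pos (by linarith), ← mul_div_assoc]
        have i1 : 0 < ε - 1 := by linarith
        gcongr
        rw [mul_sub, ← Real.rpow_add htp]
        have i3 : -ε + (ε - 1) = -1 := by ring
        rw [i3]
        have : 0 ≤ (1 + t) ^ (-ε) := by positivity
        linarith
    calc Bd t = K * G * ((1 + t) ^ (-ε) * (((1 + t) ^ (ε - 1) - 1) / (ε - 1))) := by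
          simp only [hBd]; ring
      _ ≤ K * G * ((1 + t) ^ (-min ε 1) / |ε - 1|) := by gcongr
      _ = _ := by ring
  have hLt : ‖(1 + t)⁻¹ • L (ξII t)‖ ≤ ‖L‖ * M * (1 + t) ^ (-min ε 1) := by
    rw [norm_smul, Real.norm_of_nonneg (by positivity), mul_comm]
    have j1 : (1 + t)⁻¹ ≤ (1 + t) ^ (-min ε 1) := by
      rw [← Real.rpow_neg_one]
      exact Real.rpow_le_rpow_of_exponent_le hx1 (neg_le_neg (min_le_right _ _))
    have j2 : ‖L (ξII t)‖ ≤ ‖L‖ * M := L.le_opNorm_of_le (hM t ht)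
    gcongr
  have heq : θ t - (1 / (t + 1)) • (ξI t + e0) =
      (1 + t)⁻¹ • ((p t - e0) + (1 + t)⁻¹ • L (ξII t)) := by
    have : (1 + t)⁻¹ • ((1 + t) • θ t) = θ t := by
      rw [smul_smul, inv_mul_cancel₀ htp.ne', one_smul]
    have h2 : (p t - e0) + (1 + t)⁻¹ • L (ξII t) = (1 + t) • θ t - (ξI t + e0) := by
      simp only [hp]; abel
    rw [h2, smul_sub, this, one_div, add_comm t 1]
  rw [heq, norm_smul, Real.norm_of_nonneg (by positivity)]
  have hfin : (1 + t) ^ (1 + min ε 1) = (1 + t) * (1 + t) ^ (min ε 1) := by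
    rw [Real.rpow_add htp, Real.rpow_one]
  calc _ ≤ (1 + t)⁻¹ * (K * G / |ε - 1| * (1 + t) ^ (-min ε 1)
        + ‖L‖ * M * (1 + t) ^ (-min ε 1)) := by
        gcongr
        exact (norm_add_le _ _).trans (add_le_add (key.trans hBt) hLt)
    _ = _ := by
        rw [hfin, Real.rpow_neg htp.le, div_eq_mul_inv _ ((1 + t) * _), mul_inv]; ring

end QSAaux

/-- Coupling representation for linear QSA (Theorem 2, equation (26)):
if every eigenvalue of `Ā = I + A` has real part `< -ε_S` (`0 < ε_S`, `ε_S ≠ 1`,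
`δ_S = min(ε_S,1)`) and `ξ, ξ^I, ξ^II` are bounded on `[0,∞)`, then there is a constant
`C < ∞`, independent of the initial condition, such that every linear QSA process satisfies
`‖θ(t) - (1/(t+1))(ξ^I(t) + S(t;0)θ(0))‖ ≤ C/(1+t)^{1+δ_S}` for all `t ≥ 0`. -/
theorem linear_QSA_coupling_representation
    (d : ℕ) (A Abar : Matrix (Fin d) (Fin d) ℝ) (hAbar : Abar = 1 + A)
    (S : ℝ → ℝ → Matrix (Fin d) (Fin d) ℝ)
    (hS : ∀ t r, S t r = NormedSpace.exp (Real.log ((1 + t) / (1 + r)) • Abar))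
    (εS : ℝ) (hεS : 0 < εS) (hεS1 : εS ≠ 1) (δS : ℝ) (hδS : δS = min εS 1)
    (heig : ∀ μ ∈ spectrum ℂ (Abar.map (Complex.ofReal : ℝ → ℂ)), μ.re < -εS)
    (ξ : ℝ → EuclideanSpace ℝ (Fin d)) (hξ : ContinuousOn ξ (Set.Ici 0))
    (ξI ξII : ℝ → EuclideanSpace ℝ (Fin d))
    (hξI : ∀ t, ξI t = ∫ r in (0:ℝ)..t, ξ r)
    (hξII : ∀ t, ξII t = ∫ r in (0:ℝ)..t, ξI r)
    (hbdd : ∃ M : ℝ, ∀ t : ℝ, 0 ≤ t → ‖ξ t‖ ≤ M ∧ ‖ξI t‖ ≤ M ∧ ‖ξII t‖ ≤ M) :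
    ∃ C : ℝ, ∀ θ : ℝ → EuclideanSpace ℝ (Fin d),
      (∀ t : ℝ, 0 ≤ t →
        HasDerivAt θ ((1 / (t + 1)) • (Matrix.toEuclideanLin A (θ t) + ξ t)) t) →
      ∀ t : ℝ, 0 ≤ t →
        ‖θ t - (1 / (t + 1)) • (ξI t + Matrix.toEuclideanLin (S t 0) (θ 0))‖
          ≤ C / (1 + t) ^ (1 + δS) := by
  obtain ⟨M, hM⟩ := hbdd
  obtain ⟨K, hK0, hK⟩ := QSAaux.exp_bound Abar εS heig
  set η : ℝ → EuclideanSpace ℝ (Fin d) := fun t => ξ (max 0 t) with hη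
  have hηc : Continuous η := by
    apply hξ.comp_continuous (continuous_const.max continuous_id)
    intro t
    exact le_max_left (0:ℝ) t
  set ηI : ℝ → EuclideanSpace ℝ (Fin d) := fun t => ∫ r in (0:ℝ)..t, η r with hηI
  set ηII : ℝ → EuclideanSpace ℝ (Fin d) := fun t => ∫ r in (0:ℝ)..t, ηI r with hηII
  have hd1 : ∀ t, HasDerivAt ηI (η t) t := fun t => hηc.integral_hasStrictDerivAt 0 t |>.hasDerivAt
  have hIc : Continuous ηI := continuous_iff_continuousAt.2 fun t => (hd1 t).continuousAt
  have hd2 : ∀ t, HasDerivAt ηII (ηI t) t := fun t => hIc.integral_hasStrictDerivAt 0 t |>.hasDerivAt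
  have e0 : ∀ t, 0 ≤ t → η t = ξ t := fun t ht => by simp [hη, max_eq_right ht]
  have e1 : ∀ t, 0 ≤ t → ηI t = ξI t := fun t ht => by
    rw [hξI]
    apply intervalIntegral.integral_congr
    intro r hr
    rw [Set.uIcc_of_le ht] at hr
    exact e0 r hr.1
  have e2 : ∀ t, 0 ≤ t → ηII t = ξII t := fun t ht => by
    rw [hξII]
    apply intervalIntegral.integral_congr
    intro r hr
    rw [Set.uIcc_of_le ht] at hr
    exact e1 r hr.1
  obtain ⟨C, hC⟩ := QSAaux.core (Matrix.toEuclideanCLM (𝕜 := ℝ) Abar) K εS M hK0 hεS hεS1 hK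
    η ηI ηII hd1 hd2 (by simp [hηI]) (by simp [hηII])
    (fun t ht => by rw [e2 t ht]; exact (hM t ht).2.2)
  refine ⟨C, fun θ hθ t ht => ?_⟩
  have h := hC θ (fun r hr => by
    have hA : Matrix.toEuclideanCLM (𝕜 := ℝ) Abar - 1 = Matrix.toEuclideanCLM (𝕜 := ℝ) A := by
      rw [hAbar, map_add, map_one]; abel
    rw [hA, e0 r hr]
    exact hθ r hr) t ht
  rw [e1 t ht, ← map_smul, ← QSAaux.clm_exp] at h
  rw [hδS, hS, add_zero, div_one]
  exact h
end

section
/- Optimal rate of convergence for linear QSA (Theorem 2, equation (27)). Suppose every eigenvalue λ of Ā = I + A satisfies Re(λ) < −ε_S, where 0 < ε_S and ε_S ≠ 1, and set δ_S = min(ε_S, 1). Suppose ξ, ξ^I and ξ^II are bounded on [0,∞). Then there exists a constant C < ∞ such that every linear QSA process θ satisfies, for all t ≥ 0: ‖(t+1)θ(t) − ξ^I(t)‖ ≤ C·(1 + ‖θ(0)‖)/(1+t)^{δ_S}. In particular the scaled error ν(t) = (t+1)θ(t) couples with ξ^I: ‖ν(t) − ξ^I(t)‖ → 0 as t → ∞.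 -/
open intervalIntegral Filter

section QSAMatrix

attribute [local instance] Matrix.linftyOpNormedRing Matrix.linftyOpNormedAlgebra

lemma qsa_pow_bound {B : Type*} [NormedRing B] [NormedAlgebra ℂ B] [CompleteSpace B] (a : B)
    (r : NNReal) (hr0 : 0 < r) (h : spectralRadius ℂ a < r) :
    ∃ K : ℝ, 0 ≤ K ∧ ∀ n : ℕ, ‖a ^ n‖ ≤ K * (r:ℝ) ^ n := by
  have h1 := spectrum.pow_nnnorm_pow_one_div_tendsto_nhds_spectralRadius a
  have h2 := (h1.eventually_lt_const h).and (eventually_gt_atTop 0)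
  obtain ⟨N, hN⟩ := eventually_atTop.1 h2
  have hr0' : (0:ℝ) < r := by exact_mod_cast hr0
  refine ⟨1 + ∑ i ∈ Finset.range N, ‖a ^ i‖ / (r:ℝ)^i, by positivity, fun n => ?_⟩
  have hs : 0 ≤ ∑ i ∈ Finset.range N, ‖a ^ i‖ / (r:ℝ)^i := by positivity
  have hp : 0 < (r:ℝ)^n := by positivity
  by_cases hn : n < N
  · have := Finset.single_le_sum (f := fun i => ‖a ^ i‖ / (r:ℝ)^i) (fun i _ => by positivity)
      (Finset.mem_range.2 hn)
    rw [← div_le_iff₀ hp]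
    linarith
  · obtain ⟨h3, h4⟩ := hN n (by omega)
    have h5 : ‖a ^ n‖₊ ≤ r ^ n := by
      have hn' : (n:ℝ) ≠ 0 := by positivity
      have h6 := ENNReal.rpow_le_rpow h3.le (z := (n:ℝ)) (by positivity)
      rw [← ENNReal.rpow_mul, one_div_mul_cancel hn', ENNReal.rpow_one,
        ENNReal.rpow_natCast] at h6
      exact_mod_cast h6
    have h7 : ‖a ^ n‖ ≤ (r:ℝ) ^ n := by exact_mod_cast h5
    nlinarith

lemma qsa_exp_eig {d : ℕ} (M : Matrix (Fin d) (Fin d) ℂ) (l : ℂ) (v : Fin d → ℂ)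
    (h : M.mulVec v = l • v) : (NormedSpace.exp M).mulVec v = Complex.exp l • v := by
  have hp : ∀ n : ℕ, (M ^ n).mulVec v = l ^ n • v := by
    intro n
    induction n with
    | zero => simp
    | succ n ih => rw [pow_succ, ← Matrix.mulVec_mulVec, h, Matrix.mulVec_smul, ih, smul_smul, pow_succ, mul_comm]
  have h1 := NormedSpace.exp_series_hasSum_exp' (𝕂 := ℂ) M
  have h2 := NormedSpace.exp_series_hasSum_exp' (𝕂 := ℂ) l
  rw [← Complex.exp_eq_exp_ℂ] at h2
  let f : Matrix (Fin d) (Fin d) ℂ →+ (Fin d → ℂ) :=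
    { toFun := fun N => N.mulVec v, map_zero' := by simp, map_add' := fun a b => Matrix.add_mulVec a b v }
  have hf : Continuous f := by
    change Continuous (fun N : Matrix (Fin d) (Fin d) ℂ => N.mulVec v)
    exact Continuous.matrix_mulVec continuous_id continuous_const
  have h3 := h1.map f hf
  have h4 := h2.smul_const v
  refine h3.unique ?_
  convert h4 using 2 with n
  simp [f, Matrix.smul_mulVec, hp, smul_smul]

lemma qsa_spec_exp {d : ℕ} (M : Matrix (Fin d) (Fin d) ℂ) (μ : ℂ)
    (h : μ ∈ spectrum ℂ (NormedSpace.exp M)) : ∃ l ∈ spectrum ℂ M, Complex.exp l = μ := by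
  set T := Matrix.toLin' M with hT
  set E := Matrix.toLin' (NormedSpace.exp M) with hE
  rw [← Matrix.spectrum_toLin', ← Module.End.hasEigenvalue_iff_mem_spectrum] at h
  have hc : Commute (NormedSpace.exp M) M := (Commute.refl M).exp_left
  have hinv : ∀ x ∈ Module.End.eigenspace E μ, T x ∈ Module.End.eigenspace E μ := by
    intro x hx
    rw [Module.End.mem_eigenspace_iff] at hx ⊢
    simp only [hE, hT, Matrix.toLin'_apply] at hx ⊢
    rw [Matrix.mulVec_mulVec, hc.eq, ← Matrix.mulVec_mulVec, hx, Matrix.mulVec_smul]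
  have : Nontrivial (Module.End.eigenspace E μ) :=
    (Submodule.nontrivial_iff_ne_bot).2 (Module.End.hasEigenvalue_iff.1 h)
  obtain ⟨l, hl⟩ := Module.End.exists_eigenvalue (T.restrict hinv)
  obtain ⟨x, hx⟩ := hl.exists_hasEigenvector
  have hx0 : (x : Fin d → ℂ) ≠ 0 := by
    simpa using hx.2
  have h1 : T x = l • (x : Fin d → ℂ) := by
    have := congrArg Subtype.val hx.apply_eq_smul
    simpa using this
  have h2 : E x = μ • (x : Fin d → ℂ) := Module.End.mem_eigenspace_iff.1 x.2
  refine ⟨l, ?_, ?_⟩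
  · rw [← Matrix.spectrum_toLin', ← Module.End.hasEigenvalue_iff_mem_spectrum]
    exact Module.End.hasEigenvalue_of_hasEigenvector ⟨Module.End.mem_eigenspace_iff.2 h1, hx0⟩
  · have h3 := qsa_exp_eig M l x (by simpa [hT] using h1)
    have h4 : Complex.exp l • (x : Fin d → ℂ) = μ • (x : Fin d → ℂ) := by
      rw [← h3, ← h2]; exact (Matrix.toLin'_apply _ _).symm
    exact smul_left_injective ℂ hx0 h4

lemma qsa_exp_bound {d : ℕ} (M : Matrix (Fin d) (Fin d) ℂ) (ε : ℝ)
    (h : ∀ μ ∈ spectrum ℂ M, μ.re < -ε) :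
    ∃ K : ℝ, 0 ≤ K ∧ ∀ s : ℝ, 0 ≤ s → ‖NormedSpace.exp (s • M)‖ ≤ K * Real.exp (-ε * s) := by
  rcases Nat.eq_zero_or_pos d with rfl | hd
  · refine ⟨0, le_rfl, fun s _ => ?_⟩
    rw [Subsingleton.elim (NormedSpace.exp (s • M)) 0]; simp
  have : Nonempty (Fin d) := ⟨⟨0, hd⟩⟩
  obtain ⟨r, hr⟩ : ∃ r : NNReal, (r : ℝ) = Real.exp (-ε) := ⟨⟨_, (Real.exp_pos _).le⟩, rfl⟩
  have hr0 : 0 < r := by rw [← NNReal.coe_pos, hr]; exact Real.exp_pos _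
  have h1 : spectralRadius ℂ (NormedSpace.exp M) < r := by
    apply spectrum.spectralRadius_lt_of_forall_lt
    intro z hz
    obtain ⟨l, hl, rfl⟩ := qsa_spec_exp M z hz
    rw [← NNReal.coe_lt_coe]
    simp [Complex.norm_exp, h l hl, hr]
  obtain ⟨K, hK, hb⟩ := qsa_pow_bound _ _ hr0 h1
  simp only [hr] at hb
  have hcont : Continuous (fun s : ℝ => NormedSpace.exp (s • M)) := by
    have : Continuous (NormedSpace.exp : Matrix (Fin d) (Fin d) ℂ → _) := NormedSpace.exp_continuous
    exact this.comp (continuous_id.smul continuous_const)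
  obtain ⟨K2, hK2⟩ := (isCompact_Icc (a := (0:ℝ)) (b := 1)).exists_bound_of_continuousOn hcont.continuousOn
  have hK2' : 0 ≤ K2 := (norm_nonneg _).trans (hK2 0 (by simp))
  refine ⟨K2 * K * Real.exp |ε|, by positivity, fun s hs => ?_⟩
  set n := ⌊s⌋₊
  have hn1 : (n:ℝ) ≤ s := Nat.floor_le hs
  have hn2 : s < n + 1 := Nat.lt_floor_add_one s
  have e1 : s • M = (s - n) • M + n • M := by
    rw [← Nat.cast_smul_eq_nsmul ℝ, ← add_smul]; simp
  rw [e1, Matrix.exp_add_of_commute _ _ (((Commute.refl M).smul_left _).smul_right _), Matrix.exp_nsmul]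
  have b1 := hK2 (s - n) ⟨by linarith, by linarith⟩
  have b2 := hb n
  have b3 : Real.exp (-ε) ^ n ≤ Real.exp |ε| * Real.exp (-ε * s) := by
    rw [← Real.exp_nat_mul, ← Real.exp_add]
    apply Real.exp_le_exp.2
    have := le_abs_self ε
    have := abs_nonneg ε
    nlinarith
  calc _ ≤ _ := norm_mul_le _ _
    _ ≤ K2 * (K * Real.exp (-ε) ^ n) := by
      apply mul_le_mul b1 b2 (norm_nonneg _) hK2'
    _ ≤ K2 * (K * (Real.exp |ε| * Real.exp (-ε * s))) := by gcongr
    _ = _ := by ring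

lemma qsa_lin_bound {V W : Type*} [NormedAddCommGroup V] [NormedSpace ℝ V] [FiniteDimensional ℝ V]
    [NormedAddCommGroup W] [NormedSpace ℝ W] (f : V →ₗ[ℝ] W) :
    ∃ c : ℝ, 0 ≤ c ∧ ∀ v, ‖f v‖ ≤ c * ‖v‖ :=
  ⟨‖LinearMap.toContinuousLinearMap f‖, norm_nonneg _, fun v =>
    (LinearMap.toContinuousLinearMap f).le_opNorm v⟩

lemma qsa_clm_bound {d : ℕ} (M : Matrix (Fin d) (Fin d) ℝ) (ε : ℝ)
    (h : ∀ μ ∈ spectrum ℂ (M.map (Complex.ofReal : ℝ → ℂ)), μ.re < -ε) :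
    ∃ K : ℝ, 0 ≤ K ∧ ∀ s : ℝ, 0 ≤ s →
      ‖NormedSpace.exp (s • (Matrix.toEuclideanCLM (n := Fin d) (𝕜 := ℝ) M))‖ ≤ K * Real.exp (-ε * s) := by
  obtain ⟨K, hK, hb⟩ := qsa_exp_bound _ ε h
  obtain ⟨c, hc0, hc⟩ := qsa_lin_bound
    (Matrix.toEuclideanCLM (n := Fin d) (𝕜 := ℝ)).toAlgEquiv.toLinearMap
  have hFc : Continuous (Matrix.toEuclideanCLM (n := Fin d) (𝕜 := ℝ)) :=
    LinearMap.continuous_of_finiteDimensional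
      (Matrix.toEuclideanCLM (n := Fin d) (𝕜 := ℝ)).toAlgEquiv.toLinearMap
  refine ⟨c * K, by positivity, fun s hs => ?_⟩
  have e1 : NormedSpace.exp (s • (Matrix.toEuclideanCLM (n := Fin d) (𝕜 := ℝ) M))
      = Matrix.toEuclideanCLM (n := Fin d) (𝕜 := ℝ) (NormedSpace.exp (s • M)) := by
    have := NormedSpace.map_exp (Matrix.toEuclideanCLM (n := Fin d) (𝕜 := ℝ)) hFc (s • M)
    rw [map_smul] at this
    exact this.symm
  have e2 : (NormedSpace.exp (s • M)).map (Complex.ofReal : ℝ → ℂ) =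
      NormedSpace.exp (s • M.map (Complex.ofReal : ℝ → ℂ)) := by
    have := NormedSpace.map_exp (RingHom.mapMatrix Complex.ofRealHom : Matrix (Fin d) (Fin d) ℝ →+* _)
      (continuous_id.matrix_map Complex.continuous_ofReal) (s • M)
    refine this.trans ?_
    congr 1
    ext i j
    simp
  have e3 : ‖NormedSpace.exp (s • M)‖ = ‖NormedSpace.exp (s • M.map (Complex.ofReal : ℝ → ℂ))‖ := by
    rw [← e2, Matrix.linfty_opNorm_def, Matrix.linfty_opNorm_def]
    simp
  rw [e1]
  calc _ ≤ c * ‖NormedSpace.exp (s • M)‖ := hc _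
    _ ≤ c * (K * Real.exp (-ε * s)) := by rw [e3]; gcongr; exact hb s hs
    _ = _ := by ring

end QSAMatrix

lemma qsa_duhamel {E : Type*} [NormedAddCommGroup E] [NormedSpace ℝ E] [CompleteSpace E]
    (L : E →L[ℝ] E) (K ε G : ℝ) (hK : 0 ≤ K) (hε : ε ≠ 1)
    (hL : ∀ s : ℝ, 0 ≤ s → ‖NormedSpace.exp (s • L)‖ ≤ K * Real.exp (-ε * s))
    (z g : ℝ → E) (hzc : ContinuousOn z (Set.Ici 0))
    (hz : ∀ r, 0 ≤ r → HasDerivWithinAt z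
      ((1 / (r + 1)) • L (z r) + (1 / (r + 1) ^ 2) • g r) (Set.Ici r) r)
    (hg : ∀ r, 0 ≤ r → ‖g r‖ ≤ G) (T : ℝ) (hT : 0 ≤ T) :
    ‖z T‖ ≤ K * (1 + T) ^ (-ε) * ‖z 0‖ +
      K * G * (1 + T) ^ (-ε) * (((1 + T) ^ (ε - 1) - 1) / (ε - 1)) := by
  have hexp : ∀ r, 0 ≤ r → r ≤ T →
      ‖NormedSpace.exp ((Real.log (1 + T) - Real.log (1 + r)) • L)‖
        ≤ K * ((1 + T) ^ (-ε) * (1 + r) ^ ε) := by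
    intro r hr hrT
    refine (hL _ ?_).trans_eq ?_
    · have := Real.log_le_log (by linarith : 0 < 1 + r) (by linarith : 1 + r ≤ 1 + T)
      linarith
    · rw [Real.rpow_def_of_pos (by linarith), Real.rpow_def_of_pos (by linarith), ← Real.exp_add]
      congr 2; ring
  have hder : ∀ r, 0 ≤ r → HasDerivAt
      (fun r => NormedSpace.exp ((Real.log (1 + T) - Real.log (1 + r)) • L))
      ((-(1 / (r + 1))) • (NormedSpace.exp ((Real.log (1 + T) - Real.log (1 + r)) • L) * L)) r := by
    intro r hr
    have h1 := hasDerivAt_exp_smul_const (𝕂 := ℝ) L (Real.log (1 + T) - Real.log (1 + r))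
    have h2 : HasDerivAt (fun r : ℝ => Real.log (1 + T) - Real.log (1 + r)) (-(1 / (r + 1))) r := by
      have h3 := (((hasDerivAt_id r).const_add 1).log (by simp; linarith)).const_sub (Real.log (1 + T))
      refine HasDerivAt.congr_deriv h3 ?_
      simp [add_comm]
    exact HasDerivAt.scomp r h1 h2
  have key := image_norm_le_of_norm_deriv_right_le_deriv_boundary' (a := 0) (b := T)
    (f := fun r => NormedSpace.exp ((Real.log (1 + T) - Real.log (1 + r)) • L) (z r))
    (f' := fun r => NormedSpace.exp ((Real.log (1 + T) - Real.log (1 + r)) • L)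
      ((1 / (r + 1) ^ 2) • g r))
    (B := fun r => K * (1 + T) ^ (-ε) * ‖z 0‖ +
      K * G * (1 + T) ^ (-ε) * (((1 + r) ^ (ε - 1) - 1) / (ε - 1)))
    (B' := fun r => K * G * (1 + T) ^ (-ε) * (1 + r) ^ (ε - 2))
    ?_ ?_ ?_ ?_ ?_ ?_ (x := T) ⟨hT, le_rfl⟩
  · simpa using key
  · intro r hr
    have h1 := (hder r hr.1).continuousAt.continuousWithinAt (s := Set.Icc 0 T)
    have h2 := (hzc r hr.1).mono (show Set.Icc 0 T ⊆ Set.Ici 0 from Set.Icc_subset_Ici_self)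
    exact h1.clm_apply h2
  · intro r hr
    have h1 := (hder r hr.1).hasDerivWithinAt (s := Set.Ici r)
    have h2 := h1.clm_apply (hz r hr.1)
    refine HasDerivWithinAt.congr_deriv h2 ?_
    simp
  · have := hexp 0 le_rfl hT
    simp only [add_zero, Real.one_rpow, mul_one, sub_self, zero_div, mul_zero] at this ⊢
    exact (ContinuousLinearMap.le_opNorm _ _).trans (by gcongr)
  · intro r hr
    have h0 : (1 + r) ≠ 0 := by linarith [hr.1]
    apply ContinuousAt.continuousWithinAt
    have : ContinuousAt (fun r : ℝ => (1 + r) ^ (ε - 1)) r :=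
      (continuousAt_const.add continuousAt_id).rpow_const (Or.inl h0)
    exact continuousAt_const.add
      (continuousAt_const.mul ((this.sub continuousAt_const).div_const (ε - 1)))
  · intro r hr
    have h0 : (1 + r) ≠ 0 := by linarith [hr.1]
    have h1 : HasDerivAt (fun r : ℝ => (1 + r) ^ (ε - 1)) (1 * (ε - 1) * (1 + r) ^ (ε - 1 - 1)) r :=
      ((hasDerivAt_id r).const_add 1).rpow_const (Or.inl h0)
    have h2 := ((((h1.sub_const 1).div_const (ε - 1)).const_mul (K * G * (1 + T) ^ (-ε))).const_add
      (K * (1 + T) ^ (-ε) * ‖z 0‖)).hasDerivWithinAt (s := Set.Ici r)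
    refine HasDerivWithinAt.congr_deriv h2 ?_
    have : ε - 1 ≠ 0 := sub_ne_zero.2 hε
    rw [show ε - 1 - 1 = ε - 2 by ring]
    field_simp
  · intro r hr
    have h0 : 0 < 1 + r := by linarith [hr.1]
    have h1 := hexp r hr.1 hr.2.le
    have h2 := hg r hr.1
    have h3 : (1 + r) ^ (ε - 2) = (1 + r) ^ ε * (1 / (r + 1) ^ 2) := by
      rw [Real.rpow_sub h0, add_comm r 1]
      norm_num [div_eq_mul_inv]
    have hT0 : 0 < 1 + T := by linarith
    calc _ ≤ _ := ContinuousLinearMap.le_opNorm _ _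
      _ ≤ (K * ((1 + T) ^ (-ε) * (1 + r) ^ ε)) * ((1 / (r + 1) ^ 2) * G) := by
        rw [norm_smul, Real.norm_of_nonneg (by positivity)]
        gcongr
      _ = _ := by rw [h3]; ring

lemma qsa_ftc {E : Type*} [NormedAddCommGroup E] [NormedSpace ℝ E] [CompleteSpace E]
    (f F : ℝ → E) (hf : ContinuousOn f (Set.Ici 0)) (hF : ∀ t, F t = ∫ r in (0:ℝ)..t, f r)
    (t : ℝ) (ht : 0 ≤ t) : HasDerivWithinAt F (f t) (Set.Ici t) t := by
  have : F = fun t => ∫ r in (0:ℝ)..t, f r := funext hF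
  rw [this]
  have hm : Set.Ioi t ⊆ Set.Ici 0 := fun x hx => ht.trans (le_of_lt hx)
  apply intervalIntegral.integral_hasDerivWithinAt_right (t := Set.Ioi t)
  · apply ContinuousOn.intervalIntegrable
    rw [Set.uIcc_of_le ht]
    exact hf.mono Set.Icc_subset_Ici_self
  · exact ⟨Set.Ioi t, self_mem_nhdsWithin, (hf.mono hm).aestronglyMeasurable measurableSet_Ioi⟩
  · exact (hf t ht).mono hm

lemma qsa_cont {E : Type*} [NormedAddCommGroup E] [NormedSpace ℝ E] [CompleteSpace E]
    (f F : ℝ → E) (hf : ContinuousOn f (Set.Ici 0)) (hF : ∀ t, F t = ∫ r in (0:ℝ)..t, f r) :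
    ContinuousOn F (Set.Ici 0) := by
  have : F = fun t => ∫ r in (0:ℝ)..t, f r := funext hF
  rw [this]
  intro t ht
  have ht' : (0:ℝ) ≤ t := ht
  have h1 : ContinuousOn (fun t => ∫ r in (0:ℝ)..t, f r) (Set.uIcc 0 (t+1)) := by
    apply intervalIntegral.continuousOn_primitive_interval
    apply ContinuousOn.integrableOn_compact isCompact_uIcc
    rw [Set.uIcc_of_le (by linarith)]
    exact hf.mono Set.Icc_subset_Ici_self
  rw [Set.uIcc_of_le (by linarith)] at h1
  refine (h1 t ⟨ht', by linarith⟩).mono_of_mem_nhdsWithin ?_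
  rw [← Set.Ici_inter_Iic]
  exact inter_mem_nhdsWithin _ (Iic_mem_nhds (by linarith))

/-- Optimal rate of convergence for linear QSA (Theorem 2, equation (27)):
under the eigenvalue condition `Re λ(Ā) < -ε_S` (`0 < ε_S`, `ε_S ≠ 1`, `δ_S = min(ε_S,1)`)
and boundedness of `ξ, ξ^I, ξ^II`, there is `C < ∞` such that every linear QSA process
satisfies `‖(t+1)θ(t) - ξ^I(t)‖ ≤ C(1 + ‖θ(0)‖)/(1+t)^{δ_S}`; in particular
`ν(t) = (t+1)θ(t)` couples with `ξ^I`: `‖ν(t) - ξ^I(t)‖ → 0`. -/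
theorem linear_QSA_optimal_rate
    (d : ℕ) (A Abar : Matrix (Fin d) (Fin d) ℝ) (hAbar : Abar = 1 + A)
    (S : ℝ → ℝ → Matrix (Fin d) (Fin d) ℝ)
    (hS : ∀ t r, S t r = NormedSpace.exp (Real.log ((1 + t) / (1 + r)) • Abar))
    (εS : ℝ) (hεS : 0 < εS) (hεS1 : εS ≠ 1) (δS : ℝ) (hδS : δS = min εS 1)
    (heig : ∀ μ ∈ spectrum ℂ (Abar.map (Complex.ofReal : ℝ → ℂ)), μ.re < -εS)
    (ξ : ℝ → EuclideanSpace ℝ (Fin d)) (hξ : ContinuousOn ξ (Set.Ici 0))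
    (ξI ξII : ℝ → EuclideanSpace ℝ (Fin d))
    (hξI : ∀ t, ξI t = ∫ r in (0:ℝ)..t, ξ r)
    (hξII : ∀ t, ξII t = ∫ r in (0:ℝ)..t, ξI r)
    (hbdd : ∃ M : ℝ, ∀ t : ℝ, 0 ≤ t → ‖ξ t‖ ≤ M ∧ ‖ξI t‖ ≤ M ∧ ‖ξII t‖ ≤ M) :
    ∃ C : ℝ, ∀ θ : ℝ → EuclideanSpace ℝ (Fin d),
      (∀ t : ℝ, 0 ≤ t →
        HasDerivAt θ ((1 / (t + 1)) • (Matrix.toEuclideanLin A (θ t) + ξ t)) t) →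
      (∀ t : ℝ, 0 ≤ t →
        ‖(t + 1) • θ t - ξI t‖ ≤ C * (1 + ‖θ 0‖) / (1 + t) ^ δS) ∧
      Tendsto (fun t => ‖(t + 1) • θ t - ξI t‖) atTop (nhds 0) := by
  obtain ⟨M, hM⟩ := hbdd
  obtain ⟨K, hK, hexp⟩ := qsa_clm_bound Abar εS heig
  set L := Matrix.toEuclideanCLM (n := Fin d) (𝕜 := ℝ) Abar with hL
  have hM0 : 0 ≤ M := (norm_nonneg _).trans (hM 0 le_rfl).1
  have hcI := qsa_cont ξ ξI hξ hξI
  have hcII := qsa_cont ξI ξII hcI hξII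
  set D : ℝ := |(εS - 1)⁻¹| with hD
  set G : ℝ := (‖L‖ * ‖L‖ + ‖L‖) * M with hG
  have hG0 : 0 ≤ G := by positivity
  have hδ0 : 0 < δS := by rw [hδS]; exact lt_min hεS one_pos
  have hAL : ∀ x : EuclideanSpace ℝ (Fin d), L x = x + Matrix.toEuclideanLin A x := by
    intro x
    rw [hL, hAbar, map_add, map_one, ← Matrix.coe_toEuclideanCLM_eq_toEuclideanLin]
    simp
  refine ⟨K + K * G * D + ‖L‖ * M, fun θ hθ => ?_⟩
  have hmain : ∀ t : ℝ, 0 ≤ t → ‖(t + 1) • θ t - ξI t‖ ≤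
      (K + K * G * D + ‖L‖ * M) * (1 + ‖θ 0‖) / (1 + t) ^ δS := by
    intro t ht
    have hz : ∀ r, 0 ≤ r → HasDerivWithinAt
        (fun r => (r + 1) • θ r - ξI r - (1 / (r + 1)) • L (ξII r))
        ((1 / (r + 1)) • L ((r + 1) • θ r - ξI r - (1 / (r + 1)) • L (ξII r))
          + (1 / (r + 1) ^ 2) • (L (L (ξII r)) + L (ξII r))) (Set.Ici r) r := by
      intro r hr
      have hr1 : r + 1 ≠ 0 := by linarith
      have d1 := ((((hasDerivAt_id r).add_const 1).smul (hθ r hr)).hasDerivWithinAt (s := Set.Ici r))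
      have d2 := qsa_ftc ξ ξI hξ hξI r hr
      have d3 := qsa_ftc ξI ξII hcI hξII r hr
      have d4 := L.hasFDerivAt.comp_hasDerivWithinAt r d3
      have d5 : HasDerivWithinAt (fun r : ℝ => 1 / (r + 1)) (-(1 / (r + 1) ^ 2)) (Set.Ici r) r := by
        have := (((hasDerivAt_id r).add_const 1).inv (by simpa using hr1)).hasDerivWithinAt
          (s := Set.Ici r)
        have e : (fun r : ℝ => 1 / (r + 1)) = (fun x => id x + 1)⁻¹ := by ext x; simp
        rw [e]
        refine HasDerivWithinAt.congr_deriv this ?_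
        simp [neg_div]
      have d6 := (d1.sub d2).sub (d5.smul d4)
      refine HasDerivWithinAt.congr_deriv d6 ?_
      simp only [map_sub, map_smul, id, Function.comp]
      rw [hAL (θ r)]
      generalize L (L (ξII r)) = a
      generalize L (ξII r) = b
      generalize L (ξI r) = c
      generalize Matrix.toEuclideanLin A (θ r) = e
      match_scalars <;> field_simp <;> ring
    have hzc : ContinuousOn (fun r => (r + 1) • θ r - ξI r - (1 / (r + 1)) • L (ξII r))
        (Set.Ici 0) := by
      have c1 : ContinuousOn θ (Set.Ici 0) := fun r hr => (hθ r hr).continuousAt.continuousWithinAt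
      have c2 : ContinuousOn (fun r : ℝ => 1 / (r + 1)) (Set.Ici 0) := by
        apply ContinuousOn.div continuousOn_const (by fun_prop)
        intro r hr
        have : (0:ℝ) ≤ r := hr
        linarith
      have c3 := L.continuous.comp_continuousOn hcII
      exact (((continuousOn_id.add continuousOn_const).smul c1).sub hcI).sub (c2.smul c3)
    have hg : ∀ r, 0 ≤ r → ‖L (L (ξII r)) + L (ξII r)‖ ≤ G := by
      intro r hr
      have b0 := (hM r hr).2.2
      have b1 : ‖L (ξII r)‖ ≤ ‖L‖ * M := (L.le_opNorm _).trans (by gcongr)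
      have b2 : ‖L (L (ξII r))‖ ≤ ‖L‖ * (‖L‖ * M) := (L.le_opNorm _).trans (by gcongr)
      refine (norm_add_le _ _).trans ?_
      rw [hG]; linarith
    have key := qsa_duhamel L K εS G hK hεS1 hexp _ _ hzc hz hg t ht
    have hI0 : ξI 0 = 0 := by simp [hξI]
    have hII0 : ξII 0 = 0 := by simp [hξII]
    simp only [hI0, hII0, zero_add, one_smul, sub_zero, map_zero, smul_zero] at key
    have ht1 : (1:ℝ) ≤ 1 + t := by linarith
    have ht0 : (0:ℝ) < 1 + t := by linarith
    set P := (1 + t) ^ (-δS) with hP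
    have hP0 : 0 < P := by positivity
    have p1 : (1 + t) ^ (-εS) ≤ P :=
      Real.rpow_le_rpow_of_exponent_le ht1 (by rw [hδS]; linarith [min_le_left εS 1])
    have p2 : (1 + t) ^ (-1 : ℝ) ≤ P :=
      Real.rpow_le_rpow_of_exponent_le ht1 (by rw [hδS]; linarith [min_le_right εS 1])
    have p3 : (1 + t) ^ (-εS) * (((1 + t) ^ (εS - 1) - 1) / (εS - 1)) ≤ P * D := by
      have e1 : (1 + t) ^ (-εS) * (((1 + t) ^ (εS - 1) - 1) / (εS - 1)) =
          ((1 + t) ^ (-1 : ℝ) - (1 + t) ^ (-εS)) * (εS - 1)⁻¹ := by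
        have : (1 + t) ^ (-1 : ℝ) = (1 + t) ^ (-εS) * (1 + t) ^ (εS - 1) := by
          rw [← Real.rpow_add ht0]; congr 1; ring
        rw [this]; ring
      rw [e1]
      refine (le_abs_self _).trans ?_
      rw [abs_mul]
      have q1 : 0 < (1 + t) ^ (-1 : ℝ) := by positivity
      have q2 : 0 < (1 + t) ^ (-εS) := by positivity
      gcongr
      rw [abs_le]; constructor <;> linarith
    have b1 : ‖(1 / (t + 1)) • L (ξII t)‖ ≤ P * (‖L‖ * M) := by
      rw [norm_smul, Real.norm_of_nonneg (by positivity)]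
      rw [Real.rpow_neg_one] at p2
      have : 1 / (t + 1) ≤ P := by rw [one_div, add_comm]; exact p2
      have b0 := (hM t ht).2.2
      have b1 : ‖L (ξII t)‖ ≤ ‖L‖ * M := (L.le_opNorm _).trans (by gcongr)
      gcongr
    have b2 : ‖(t + 1) • θ t - ξI t‖ ≤ ‖(t + 1) • θ t - ξI t - (1 / (t + 1)) • L (ξII t)‖ +
        ‖(1 / (t + 1)) • L (ξII t)‖ := by
      simpa using norm_add_le ((t + 1) • θ t - ξI t - (1 / (t + 1)) • L (ξII t))
        ((1 / (t + 1)) • L (ξII t))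
    have b3 : K * (1 + t) ^ (-εS) * ‖θ 0‖ ≤ K * P * ‖θ 0‖ := by gcongr
    have b4 : K * G * (1 + t) ^ (-εS) * (((1 + t) ^ (εS - 1) - 1) / (εS - 1)) ≤ K * G * (P * D) := by
      rw [mul_assoc (K * G)]; gcongr
    have hθ0 := norm_nonneg (θ 0)
    have hD0 : 0 ≤ D := abs_nonneg _
    rw [div_eq_mul_inv, ← Real.rpow_neg ht0.le, ← hP]
    have r1 : 0 ≤ K * P := by positivity
    have r2 : 0 ≤ (K * G * D + ‖L‖ * M) * ‖θ 0‖ * P := by positivity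
    calc _ ≤ K * P * ‖θ 0‖ + K * G * (P * D) + P * (‖L‖ * M) := by linarith
      _ ≤ _ := by linarith
  refine ⟨hmain, ?_⟩
  have hlim : Tendsto (fun t : ℝ => (K + K * G * D + ‖L‖ * M) * (1 + ‖θ 0‖) / (1 + t) ^ δS)
      atTop (nhds 0) :=
    ((tendsto_rpow_atTop hδ0).comp (tendsto_atTop_add_const_left atTop 1 tendsto_id)).const_div_atTop _
  exact squeeze_zero' (Eventually.of_forall fun _ => norm_nonneg _)
    ((eventually_ge_atTop 0).mono hmain) hlim
end

section
/- Variation-of-constants formula for the second-order error (Lemma 2, equation (32)). Let θ be a linear QSA process and ν̃(t) = (t+1)θ(t) − ξ^I(t). Then for all t ≥ 0: ν̃(t) = S(t;0)·θ(0) + ∫₀^t (1/(r+1))·S(t;r)·Ā·ξ^I(r) dr. -/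
open intervalIntegral

section Helpers
attribute [local instance] Matrix.linftyOpNormedRing Matrix.linftyOpNormedAlgebra

theorem aux_hasDerivAt_S {d : ℕ} (M : Matrix (Fin d) (Fin d) ℝ) (t r : ℝ) (ht : 0 ≤ t)
    (hr : 0 ≤ r) :
    HasDerivAt (fun r : ℝ => (Matrix.toEuclideanCLM (n := Fin d) (𝕜 := ℝ)
        (NormedSpace.exp (Real.log ((1 + t) / (1 + r)) • M)) :
          EuclideanSpace ℝ (Fin d) →L[ℝ] EuclideanSpace ℝ (Fin d)))
      ((-(1 / (r + 1))) • (Matrix.toEuclideanCLM (n := Fin d) (𝕜 := ℝ)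
        (NormedSpace.exp (Real.log ((1 + t) / (1 + r)) • M) * M))) r := by
  have h1 : HasDerivAt (fun r : ℝ => Real.log ((1 + t) / (1 + r))) (-(1 / (r + 1))) r := by
    have h0 : HasDerivAt (fun r : ℝ => 1 + r) 1 r := (hasDerivAt_id r).const_add 1
    have h2 := ((hasDerivAt_const r (1 + t)).div h0 (by positivity)).log
      (by simp only [Pi.div_apply]; positivity)
    refine h2.congr_deriv ?_
    change (0 * (1 + r) - (1 + t) * 1) / (1 + r) ^ 2 / ((1 + t) / (1 + r)) = _
    have : r + 1 ≠ 0 := by positivity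
    have : 1 + r ≠ 0 := by positivity
    have : 1 + t ≠ 0 := by positivity
    field_simp
    ring
  have h3 := (hasDerivAt_exp_smul_const M (Real.log ((1 + t) / (1 + r)))).scomp r h1
  let L : Matrix (Fin d) (Fin d) ℝ →ₗ[ℝ]
      (EuclideanSpace ℝ (Fin d) →L[ℝ] EuclideanSpace ℝ (Fin d)) :=
    (Matrix.toEuclideanCLM (n := Fin d) (𝕜 := ℝ)).toAlgEquiv.toLinearMap
  have h4 := (LinearMap.toContinuousLinearMap L).hasFDerivAt.comp_hasDerivAt r h3
  exact h4.congr_deriv (L.map_smul _ _)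

end Helpers

/-- Variation-of-constants formula for the second-order error (Lemma 2, equation (32)):
`ν̃(t) = S(t;0) θ(0) + ∫₀^t (1/(r+1)) S(t;r) Ā ξ^I(r) dr`. -/
theorem second_order_error_representation
    (d : ℕ) (A Abar : Matrix (Fin d) (Fin d) ℝ) (hAbar : Abar = 1 + A)
    (S : ℝ → ℝ → Matrix (Fin d) (Fin d) ℝ)
    (hS : ∀ t r, S t r = NormedSpace.exp (Real.log ((1 + t) / (1 + r)) • Abar))
    (ξ : ℝ → EuclideanSpace ℝ (Fin d)) (hξ : ContinuousOn ξ (Set.Ici 0))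
    (ξI : ℝ → EuclideanSpace ℝ (Fin d)) (hξI : ∀ t, ξI t = ∫ r in (0:ℝ)..t, ξ r)
    (θ : ℝ → EuclideanSpace ℝ (Fin d))
    (hθ : ∀ t : ℝ, 0 ≤ t →
      HasDerivAt θ ((1 / (t + 1)) • (Matrix.toEuclideanLin A (θ t) + ξ t)) t)
    (νt : ℝ → EuclideanSpace ℝ (Fin d))
    (hνt : ∀ t, νt t = (t + 1) • θ t - ξI t) :
    ∀ t : ℝ, 0 ≤ t →
      νt t = Matrix.toEuclideanLin (S t 0) (θ 0)
        + ∫ r in (0:ℝ)..t, (1 / (r + 1)) • Matrix.toEuclideanLin (S t r * Abar) (ξI r) := by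
  intro t ht
  set T := fun M : Matrix (Fin d) (Fin d) ℝ => Matrix.toEuclideanCLM (n := Fin d) (𝕜 := ℝ) M with hT
  have hTL : ∀ M x, Matrix.toEuclideanLin M x = T M x := fun M x => rfl
  have hTmul : ∀ M N x, T (M * N) x = T M (T N x) := by
    intro M N x
    simp [hT]
  have hTA : ∀ x, T Abar x = x + T A x := by
    intro x
    simp [hT, hAbar]
  have hint : ∀ b, 0 ≤ b → IntervalIntegrable ξ MeasureTheory.volume 0 b := by
    intro b hb
    apply ContinuousOn.intervalIntegrable
    rw [Set.uIcc_of_le hb]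
    exact hξ.mono Set.Icc_subset_Ici_self
  have hξI' : ξI = fun t => ∫ r in (0:ℝ)..t, ξ r := funext hξI
  have hξIc : ContinuousOn ξI (Set.Icc 0 t) := by
    rw [hξI']
    have := intervalIntegral.continuousOn_primitive_interval' (hint t ht) Set.left_mem_uIcc
    rwa [Set.uIcc_of_le ht] at this
  have hξId : ∀ r ∈ Set.Ioo 0 t, HasDerivAt ξI (ξ r) r := by
    intro r hr
    rw [hξI']
    have hn : Set.Ici (0:ℝ) ∈ nhds r := Ici_mem_nhds hr.1
    refine intervalIntegral.integral_hasDerivAt_right (hint r hr.1.le) ?_ (hξ.continuousAt hn)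
    exact ⟨Set.Ici 0, hn, hξ.aestronglyMeasurable measurableSet_Ici⟩
  have hSd : ∀ r, 0 ≤ r → HasDerivAt (fun r => T (S t r))
      ((-(1 / (r + 1))) • T (S t r * Abar)) r := by
    intro r hr
    simp only [hS]
    exact aux_hasDerivAt_S Abar t r ht hr
  have hSc : ContinuousOn (fun r => T (S t r)) (Set.Icc 0 t) :=
    fun r hr => (hSd r hr.1).continuousAt.continuousWithinAt
  have hν' : νt = fun t => (t + 1) • θ t - ξI t := funext hνt
  have hθc : ContinuousOn θ (Set.Icc 0 t) :=
    fun r hr => (hθ r hr.1).continuousAt.continuousWithinAt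
  have hνc : ContinuousOn νt (Set.Icc 0 t) := by
    rw [hν']
    exact ((by fun_prop : ContinuousOn (fun t : ℝ => t + 1) (Set.Icc 0 t)).smul hθc).sub hξIc
  have key := intervalIntegral.integral_eq_sub_of_hasDerivAt_of_le ht
    (f := fun r => T (S t r) (νt r))
    (f' := fun r => (1 / (r + 1)) • Matrix.toEuclideanLin (S t r * Abar) (ξI r))
    (hSc.clm_apply hνc) ?_ ?_
  · rw [key]
    have e1 : S t t = 1 := by
      rw [hS, div_self (by positivity)]
      simp
    have e2 : νt 0 = θ 0 := by simp [hνt, hξI]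
    have e3 : T 1 (νt t) = νt t := by simp [hT]
    simp only [e1, e2, e3, hTL]
    abel
  · intro r hr
    have hr0 : r + 1 ≠ 0 := by linarith [hr.1]
    have hνd : HasDerivAt νt (T Abar (θ r)) r := by
      rw [hν']
      have := (((hasDerivAt_id r).add_const 1).smul (hθ r hr.1.le)).sub (hξId r hr)
      refine this.congr_deriv ?_
      simp only [hTL, hTA, id, smul_smul, mul_one_div_cancel hr0, one_smul]
      abel
    have := (hSd r hr.1.le).clm_apply hνd
    refine this.congr_deriv ?_
    have e : θ r = (1 / (r + 1)) • (νt r + ξI r) := by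
      rw [hνt, sub_add_cancel, smul_smul, one_div_mul_cancel hr0, one_smul]
    rw [e]
    simp only [hTL, hTmul, map_smul, map_add, smul_add, smul_apply, neg_smul,
      neg_apply]
    abel
  · apply ContinuousOn.intervalIntegrable
    rw [Set.uIcc_of_le ht]
    simp only [hTL, hTmul]
    have h1 : ContinuousOn (fun r : ℝ => 1 / (r + 1)) (Set.Icc 0 t) := ?_
    · exact h1.smul (hSc.clm_apply ((T Abar).continuous.comp_continuousOn hξIc))
    refine ContinuousOn.div (by fun_prop) (by fun_prop) ?_
    intro r hr
    linarith [hr.1]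
end

section
/- Decay bound on the state transition matrix (Lemma 2, final assertion). Suppose every eigenvalue λ of Ā = I + A satisfies Re(λ) < −ε_S for some ε_S > 0. Then there exists b_S < ∞ such that for all 0 ≤ r ≤ t: ‖S(t;r)‖₂ ≤ b_S·((1+t)/(1+r))^{−ε_S}, where ‖·‖₂ denotes the operator norm (maximal singular value). -/
section helpers
attribute [local instance] Matrix.linftyOpNormedRing Matrix.linftyOpNormedAlgebra

lemma aux_gen (d : ℕ) (B : Matrix (Fin d) (Fin d) ℂ) (ε : ℝ) (μ : ℂ) (hμ : μ.re < -ε)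
    (k : ℕ) (v : Fin d → ℂ) (hv : ((B - μ • (1 : Matrix (Fin d) (Fin d) ℂ)) ^ k).mulVec v = 0) :
    ∃ C : ℝ, ∀ s : ℝ, 0 ≤ s →
      ‖(NormedSpace.exp ((s : ℂ) • B)).mulVec v‖ ≤ C * Real.exp (-ε * s) := by
  set N := B - μ • (1 : Matrix (Fin d) (Fin d) ℂ) with hN
  set δ := -ε - μ.re with hδ
  have hδ0 : 0 < δ := by linarith
  have hz : ∀ n, k ≤ n → (N ^ n).mulVec v = 0 := by
    intro n hn
    obtain ⟨m, rfl⟩ := Nat.exists_eq_add_of_le' hn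
    rw [pow_add, ← Matrix.mulVec_mulVec, hv, Matrix.mulVec_zero]
  refine ⟨∑ n ∈ Finset.range k, (δ ^ n)⁻¹ * ‖(N ^ n).mulVec v‖, fun s hs => ?_⟩
  have hexpN : (NormedSpace.exp ((s : ℂ) • N)).mulVec v
      = ∑ n ∈ Finset.range k, ((n.factorial : ℂ)⁻¹ * (s : ℂ) ^ n) • (N ^ n).mulVec v := by
    have h1 := NormedSpace.exp_series_hasSum_exp' (𝕂 := ℂ) ((s : ℂ) • N)
    have h2 : HasSum (fun n : ℕ => ((n.factorial : ℂ)⁻¹ • ((s : ℂ) • N) ^ n).mulVec v)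
        ((NormedSpace.exp ((s : ℂ) • N)).mulVec v) :=
      h1.map (⟨⟨fun M : Matrix (Fin d) (Fin d) ℂ => M.mulVec v, Matrix.zero_mulVec v⟩,
        fun a b => Matrix.add_mulVec a b v⟩ : Matrix (Fin d) (Fin d) ℂ →+ (Fin d → ℂ))
        (by
          change Continuous fun M : Matrix (Fin d) (Fin d) ℂ => M.mulVec v
          exact Continuous.matrix_mulVec continuous_id continuous_const)
    have h3 := hasSum_sum_of_ne_finset_zero (L := SummationFilter.unconditional ℕ) (s := Finset.range k)
      (f := fun n : ℕ => ((n.factorial : ℂ)⁻¹ • ((s : ℂ) • N) ^ n).mulVec v) (by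
        intro n hn
        simp only [Finset.mem_range, not_lt] at hn
        simp only [smul_pow, Matrix.smul_mulVec, hz n hn, smul_zero])
    rw [h2.unique h3]
    refine Finset.sum_congr rfl fun n _ => ?_
    simp only [smul_pow, Matrix.smul_mulVec, smul_smul]
  have hsplit : NormedSpace.exp ((s : ℂ) • B)
      = Complex.exp (s * μ) • NormedSpace.exp ((s : ℂ) • N) := by
    have : (s : ℂ) • B = algebraMap ℂ (Matrix (Fin d) (Fin d) ℂ) (s * μ) + (s : ℂ) • N := by
      rw [hN, Algebra.algebraMap_eq_smul_one, smul_sub, smul_smul]; abel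
    have e1 : NormedSpace.exp (algebraMap ℂ (Matrix (Fin d) (Fin d) ℂ) (s * μ))
        = algebraMap ℂ (Matrix (Fin d) (Fin d) ℂ) (Complex.exp (s * μ)) := by
      rw [Complex.exp_eq_exp_ℂ]
      exact (NormedSpace.algebraMap_exp_comm (𝔸 := Matrix (Fin d) (Fin d) ℂ) (s * μ)).symm
    rw [this, Matrix.exp_add_of_commute _ _ (Algebra.commute_algebraMap_left _ _), e1, ← Algebra.smul_def]
  rw [hsplit, Matrix.smul_mulVec, norm_smul, hexpN, Complex.norm_exp]
  have hre : ((s : ℂ) * μ).re = -ε * s - δ * s := by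
    simp [hδ]; ring
  rw [hre, mul_comm, Finset.sum_mul]
  refine (mul_le_mul_of_nonneg_right (norm_sum_le _ _) (Real.exp_nonneg _)).trans ?_
  rw [Finset.sum_mul]
  refine Finset.sum_le_sum fun n _ => ?_
  rw [norm_smul]
  have h4 := Real.pow_div_factorial_le_exp (δ * s) (by positivity) n
  have h5 : ‖((n.factorial : ℂ)⁻¹ * (s : ℂ) ^ n)‖ ≤ (δ ^ n)⁻¹ * Real.exp (δ * s) := by
    rw [norm_mul, norm_inv, norm_pow, Complex.norm_natCast, Complex.norm_real,
      Real.norm_of_nonneg hs, le_inv_mul_iff₀ (by positivity)]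
    refine le_trans (le_of_eq ?_) h4
    rw [mul_pow]; ring
  calc _ ≤ (δ ^ n)⁻¹ * Real.exp (δ * s) * ‖(N ^ n).mulVec v‖ * Real.exp (-ε * s - δ * s) := by
        gcongr
    _ = (δ ^ n)⁻¹ * ‖(N ^ n).mulVec v‖ * (Real.exp (δ * s) * Real.exp (-ε * s - δ * s)) := by ring
    _ = _ := by rw [← Real.exp_add]; congr 2; ring

lemma aux_all (d : ℕ) (B : Matrix (Fin d) (Fin d) ℂ) (ε : ℝ)
    (h : ∀ μ ∈ spectrum ℂ B, μ.re < -ε) (v : Fin d → ℂ) :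
    ∃ C : ℝ, ∀ s : ℝ, 0 ≤ s →
      ‖(NormedSpace.exp ((s : ℂ) • B)).mulVec v‖ ≤ C * Real.exp (-ε * s) := by
  have hv : v ∈ ⨆ μ, Module.End.maxGenEigenspace (Matrix.toLin' B) μ := by
    rw [Module.End.iSup_maxGenEigenspace_eq_top]; trivial
  induction hv using Submodule.iSup_induction' with
  | mem μ x hx =>
    by_cases hx0 : x = 0
    · exact ⟨0, fun s _ => by simp [hx0]⟩
    obtain ⟨k, hk⟩ := (Module.End.mem_maxGenEigenspace _ _ _).1 hx
    have hμ : μ ∈ spectrum ℂ B := by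
      rw [← Matrix.spectrum_toLin', ← Module.End.hasEigenvalue_iff_mem_spectrum]
      refine Module.End.hasEigenvalue_of_hasGenEigenvalue (k := k) ?_
      intro hb
      have : x ∈ Module.End.genEigenspace (Matrix.toLin' B) μ k := by
        rw [Module.End.mem_genEigenspace_nat]; exact hk
      rw [hb] at this
      exact hx0 (by simpa using this)
    refine aux_gen d B ε μ (h μ hμ) k x ?_
    rw [← hk, ← Matrix.toLin'_apply, Matrix.toLin'_pow, map_sub, map_smul, Matrix.toLin'_one]
    rfl
  | zero => exact ⟨0, fun s _ => by simp⟩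
  | add x y _ _ hx hy =>
    obtain ⟨C, hC⟩ := hx
    obtain ⟨D, hD⟩ := hy
    refine ⟨C + D, fun s hs => ?_⟩
    rw [Matrix.mulVec_add, add_mul]
    exact (norm_add_le _ _).trans (add_le_add (hC s hs) (hD s hs))

lemma aux_entry (d : ℕ) (M : Matrix (Fin d) (Fin d) ℝ) (ε : ℝ)
    (h : ∀ μ ∈ spectrum ℂ (M.map (Complex.ofReal : ℝ → ℂ)), μ.re < -ε) (i j : Fin d) :
    ∃ C : ℝ, ∀ s : ℝ, 0 ≤ s →
      ‖(NormedSpace.exp (s • M)) i j‖ ≤ C * Real.exp (-ε * s) := by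
  obtain ⟨C, hC⟩ := aux_all d _ ε h (Pi.single j 1)
  refine ⟨C, fun s hs => le_trans ?_ (hC s hs)⟩
  have h1 := NormedSpace.map_exp (Complex.ofRealHom.mapMatrix (m := Fin d))
    (by
      change Continuous fun X : Matrix (Fin d) (Fin d) ℝ => X.map (Complex.ofReal : ℝ → ℂ)
      exact Continuous.matrix_map continuous_id Complex.continuous_ofReal) (s • M)
  have h2 : Complex.ofRealHom.mapMatrix (s • M) = (s : ℂ) • M.map (Complex.ofReal : ℝ → ℂ) := by
    ext a b; simp
  rw [h2] at h1
  have h3 : NormedSpace.exp ((s : ℂ) • M.map (Complex.ofReal : ℝ → ℂ))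
      = (NormedSpace.exp (s • M)).map (Complex.ofReal : ℝ → ℂ) := h1.symm
  rw [h3]
  refine le_trans (le_of_eq ?_) (norm_le_pi_norm _ i)
  simp
end helpers


/-- Decay bound on the state transition matrix (Lemma 2, final assertion):
if every eigenvalue `λ` of `Ā = I + A` (viewed over `ℂ`) satisfies `Re λ < -ε_S` with `ε_S > 0`,
then there is `b_S < ∞` with `‖S(t;r)‖₂ ≤ b_S ((1+t)/(1+r))^{-ε_S}` for `0 ≤ r ≤ t`. -/
theorem state_transition_matrix_decay
    (d : ℕ) (A Abar : Matrix (Fin d) (Fin d) ℝ) (hAbar : Abar = 1 + A)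
    (S : ℝ → ℝ → Matrix (Fin d) (Fin d) ℝ)
    (hS : ∀ t r, S t r = NormedSpace.exp (Real.log ((1 + t) / (1 + r)) • Abar))
    (εS : ℝ) (hεS : 0 < εS)
    (heig : ∀ μ ∈ spectrum ℂ (Abar.map (Complex.ofReal : ℝ → ℂ)), μ.re < -εS) :
    ∃ bS : ℝ, ∀ r t : ℝ, 0 ≤ r → r ≤ t →
      ‖(Matrix.toEuclideanCLM (𝕜 := ℝ) (S t r) :
          EuclideanSpace ℝ (Fin d) →L[ℝ] EuclideanSpace ℝ (Fin d))‖
        ≤ bS * ((1 + t) / (1 + r)) ^ (-εS) := by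
  choose C hC using fun i j => aux_entry d Abar εS heig i j
  let L : Matrix (Fin d) (Fin d) ℝ → (EuclideanSpace ℝ (Fin d) →L[ℝ] EuclideanSpace ℝ (Fin d)) :=
    fun M => Matrix.toEuclideanCLM (𝕜 := ℝ) M
  refine ⟨∑ i, ∑ j, C i j * ‖L (Matrix.single i j 1)‖, fun r t hr hrt => ?_⟩
  have hx : 1 ≤ (1 + t) / (1 + r) := by
    rw [le_div_iff₀ (by linarith)]; linarith
  set s := Real.log ((1 + t) / (1 + r)) with hs
  have hs0 : 0 ≤ s := Real.log_nonneg hx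
  have hpow : ((1 + t) / (1 + r)) ^ (-εS) = Real.exp (-εS * s) := by
    rw [Real.rpow_def_of_pos (by linarith), mul_comm]
  rw [hpow, hS, Finset.sum_mul]
  have hC' := fun i j => hC i j s hs0
  rw [← hs]
  generalize NormedSpace.exp (s • Abar) = E at hC'
  have hE : Matrix.toEuclideanCLM (𝕜 := ℝ) E = ∑ i, ∑ j, E i j • L (Matrix.single i j 1) := by
    conv_lhs => rw [Matrix.matrix_eq_sum_single E]
    simp only [map_sum]
    refine Finset.sum_congr rfl fun i _ => Finset.sum_congr rfl fun j _ => ?_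
    change _ = E i j • Matrix.toEuclideanCLM (𝕜 := ℝ) (Matrix.single i j (1 : ℝ))
    rw [← map_smul, Matrix.smul_single, smul_eq_mul, mul_one]
  rw [hE]
  refine (norm_sum_le _ _).trans (Finset.sum_le_sum fun i _ => ?_)
  rw [Finset.sum_mul]
  refine (norm_sum_le _ _).trans (Finset.sum_le_sum fun j _ => ?_)
  rw [norm_smul]
  calc _ ≤ (C i j * Real.exp (-εS * s)) * ‖L (Matrix.single i j 1)‖ := by
        gcongr
        exact hC' i j
    _ = _ := by ring
end

section
/- Integration-by-parts identity for weighted transition-matrix integrals (Lemma 3, general form, equation (48)). Let γ : [0,∞) → ℝ^d be continuous and let γ^I : [0,∞) → ℝ^d be continuously differentiable with dγ^I/dr(r) = γ(r) for all r ≥ 0. Then for every real m ≥ 0 and every t > 0: ∫₀^t (1+r)^{−m}·S(t;r)·γ(r) dr = (1+t)^{−m}·γ^I(t) − S(t;0)·γ^I(0) + ∫₀^t (1+r)^{−(m+1)}·S(t;r)·(m·I + Ā)·γ^I(r) dr. -/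
open intervalIntegral

section Helpers

attribute [local instance] Matrix.linftyOpNormedRing Matrix.linftyOpNormedAlgebra

/-- Derivative of the scaled transition matrix applied to a moving vector. -/
theorem transition_exp_deriv (d : ℕ) (M : Matrix (Fin d) (Fin d) ℝ) (t : ℝ) (ht : 0 < t)
    (r : ℝ) (hr : 0 ≤ r) :
    HasDerivAt (fun r : ℝ => NormedSpace.exp (Real.log ((1 + t) / (1 + r)) • M))
      ((-(1 + r)⁻¹) • (NormedSpace.exp (Real.log ((1 + t) / (1 + r)) • M) * M)) r := by
  have h1 : HasDerivAt (fun r : ℝ => Real.log ((1 + t) / (1 + r))) (-(1 + r)⁻¹) r := by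
    have hp : (1 + r) ≠ 0 := by positivity
    have hq : (1 + t) ≠ 0 := by positivity
    have h := ((hasDerivAt_const r (1 + t)).div ((hasDerivAt_id r).const_add 1) hp).log
      (div_ne_zero hq hp)
    refine h.congr_deriv ?_
    simp only [id, Pi.div_apply]
    field_simp
    ring
  exact (hasDerivAt_exp_smul_const (𝕂 := ℝ) M (Real.log ((1 + t) / (1 + r)))).scomp r h1

/-- The evaluation map from matrices to operators, as a continuous linear map. -/
noncomputable def matB (d : ℕ) : Matrix (Fin d) (Fin d) ℝ →L[ℝ]
    (EuclideanSpace ℝ (Fin d) →L[ℝ] EuclideanSpace ℝ (Fin d)) :=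
  LinearMap.toContinuousLinearMap
    ((LinearMap.toContinuousLinearMap
      (E := EuclideanSpace ℝ (Fin d)) (F' := EuclideanSpace ℝ (Fin d)) (𝕜 := ℝ)).toLinearMap.comp
      (Matrix.toEuclideanLin (𝕜 := ℝ) (m := Fin d) (n := Fin d)).toLinearMap)

theorem matB_apply (d : ℕ) (M : Matrix (Fin d) (Fin d) ℝ) (v : EuclideanSpace ℝ (Fin d)) :
    matB d M v = Matrix.toEuclideanLin M v := rfl

theorem matB_deriv (d : ℕ) (M : Matrix (Fin d) (Fin d) ℝ) (t : ℝ) (ht : 0 < t)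
    (r : ℝ) (hr : 0 ≤ r) :
    HasDerivAt (fun r : ℝ => matB d (NormedSpace.exp (Real.log ((1 + t) / (1 + r)) • M)))
      (matB d ((-(1 + r)⁻¹) • (NormedSpace.exp (Real.log ((1 + t) / (1 + r)) • M) * M))) r :=
  (matB d).hasFDerivAt.comp_hasDerivAt r (transition_exp_deriv d M t ht r hr)

theorem matB_cont (d : ℕ) (M N : Matrix (Fin d) (Fin d) ℝ) (t : ℝ) (ht : 0 < t) :
    ContinuousOn (fun r : ℝ =>
      matB d (NormedSpace.exp (Real.log ((1 + t) / (1 + r)) • M) * N)) (Set.Icc 0 t) := by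
  intro r hr
  have h := (transition_exp_deriv d M t ht r hr.1).continuousAt
  exact ((matB d).continuous.continuousAt.comp
    (h.mul continuousAt_const)).continuousWithinAt

end Helpers

/-- Integration-by-parts identity for weighted transition-matrix integrals
(Lemma 3, general form, equation (48)): for continuous `γ` with antiderivative `γ^I`,
real `m ≥ 0` and `t > 0`,
`∫₀^t (1+r)^{-m} S(t;r) γ(r) dr = (1+t)^{-m} γ^I(t) - S(t;0) γ^I(0)
  + ∫₀^t (1+r)^{-(m+1)} S(t;r) (m I + Ā) γ^I(r) dr`. -/
theorem weighted_state_transition_integration_by_parts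
    (d : ℕ) (A Abar : Matrix (Fin d) (Fin d) ℝ) (hAbar : Abar = 1 + A)
    (S : ℝ → ℝ → Matrix (Fin d) (Fin d) ℝ)
    (hS : ∀ t r, S t r = NormedSpace.exp (Real.log ((1 + t) / (1 + r)) • Abar))
    (γ γI : ℝ → EuclideanSpace ℝ (Fin d))
    (hγ : ContinuousOn γ (Set.Ici 0))
    (hγI : ∀ r : ℝ, 0 ≤ r → HasDerivAt γI (γ r) r) :
    ∀ m : ℝ, 0 ≤ m → ∀ t : ℝ, 0 < t →
      (∫ r in (0:ℝ)..t, ((1 + r) ^ (-m) : ℝ) • Matrix.toEuclideanLin (S t r) (γ r))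
        = ((1 + t) ^ (-m) : ℝ) • γI t - Matrix.toEuclideanLin (S t 0) (γI 0)
          + ∫ r in (0:ℝ)..t, ((1 + r) ^ (-(m + 1)) : ℝ) •
              Matrix.toEuclideanLin (S t r * (m • (1 : Matrix (Fin d) (Fin d) ℝ) + Abar)) (γI r) := by
  intro m hm t ht
  simp only [← matB_apply, hS]
  set X : ℝ → Matrix (Fin d) (Fin d) ℝ :=
    fun r => NormedSpace.exp (Real.log ((1 + t) / (1 + r)) • Abar) with hX
  have hrp : ∀ p : ℝ, ContinuousOn (fun r : ℝ => (1 + r) ^ p) (Set.Icc 0 t) := by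
    intro p
    refine ContinuousOn.rpow_const (by fun_prop) ?_
    intro r hr
    left
    have := hr.1
    positivity
  have hγIc : ContinuousOn γI (Set.Icc 0 t) :=
    fun r hr => (hγI r hr.1).continuousAt.continuousWithinAt
  have hγc : ContinuousOn γ (Set.Icc 0 t) := hγ.mono fun r hr => hr.1
  have hXc : ContinuousOn (fun r => matB d (X r)) (Set.Icc 0 t) := by
    simpa using matB_cont d Abar 1 t ht
  have c1 : ContinuousOn (fun r : ℝ => ((1 + r) ^ (-m) : ℝ) • matB d (X r) (γ r))
      (Set.Icc 0 t) := (hrp _).smul (hXc.clm_apply hγc)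
  have c2 : ContinuousOn (fun r : ℝ => ((1 + r) ^ (-(m + 1)) : ℝ) •
      matB d (X r * (m • (1 : Matrix (Fin d) (Fin d) ℝ) + Abar)) (γI r)) (Set.Icc 0 t) :=
    (hrp _).smul ((matB_cont d Abar _ t ht).clm_apply hγIc)
  have c3 : ContinuousOn (fun r : ℝ => ((1 + r) ^ (-m) : ℝ) • matB d (X r) (γI r))
      (Set.Icc 0 t) := (hrp _).smul (hXc.clm_apply hγIc)
  have i1 := c1.intervalIntegrable_of_Icc (μ := MeasureTheory.volume) ht.le
  have i2 := c2.intervalIntegrable_of_Icc (μ := MeasureTheory.volume) ht.le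
  have key := integral_eq_sub_of_hasDerivAt_of_le ht.le c3 (f' := fun r =>
    ((1 + r) ^ (-m) : ℝ) • matB d (X r) (γ r) - ((1 + r) ^ (-(m + 1)) : ℝ) •
      matB d (X r * (m • (1 : Matrix (Fin d) (Fin d) ℝ) + Abar)) (γI r)) ?_ (i1.sub i2)
  · rw [integral_sub i1 i2] at key
    have e : X t = 1 := by
      have : (1 + t) ≠ 0 := by positivity
      simp [hX, div_self this]
    have e1 : matB d (1 : Matrix (Fin d) (Fin d) ℝ) (γI t) = γI t := by
      simp [matB_apply, Matrix.toLpLin_one]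
    rw [e, e1] at key
    simp only [add_zero, Real.one_rpow, one_smul] at key
    have e0 : X 0 = NormedSpace.exp (Real.log ((1 + t) / (1 + 0)) • Abar) := rfl
    simp only [add_zero] at e0 ⊢
    rw [← e0, ← key]
    abel
  · intro r hr
    have hp : 0 < 1 + r := by have := hr.1; positivity
    have h1 : HasDerivAt (fun r : ℝ => (1 + r) ^ (-m)) (-m * (1 + r) ^ (-(m + 1))) r := by
      have h := ((hasDerivAt_id r).const_add 1).rpow_const (p := -m) (Or.inl hp.ne')
      refine h.congr_deriv ?_
      simp only [id]
      rw [show -m - 1 = -(m + 1) by ring]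
      ring
    have h2 := h1.smul ((matB_deriv d Abar t ht r hr.1.le).clm_apply (hγI r hr.1.le))
    refine h2.congr_deriv ?_
    have e : (1 + r) ^ (-(m + 1)) = (1 + r) ^ (-m) * (1 + r)⁻¹ := by
      rw [show -(m + 1) = -m - 1 by ring, Real.rpow_sub_one hp.ne']
      rfl
    rw [e]
    change ((1 + r) ^ (-m) : ℝ) • (matB d (-(1 + r)⁻¹ • (X r * Abar)) (γI r)
      + matB d (X r) (γ r)) + (-m * ((1 + r) ^ (-m) * (1 + r)⁻¹)) • matB d (X r) (γI r) = _
    simp only [mul_add, mul_smul_comm, mul_one, map_add, map_smul,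
      ContinuousLinearMap.add_apply, ContinuousLinearMap.smul_apply]
    module
end
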